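/- Let R > 0 and let μ: U → U be holomorphic, and write F = g + conj(h) where g(z) = R ∫₀^z dt/(1 + t²μ(t)) and h(z) = R ∫₀^z μ(t) dt/(1 + t²μ(t)). Then the holomorphic function g − h, i.e. z ↦ R ∫₀^z (1 − μ(t))/(1 + t²μ(t)) dt, is univalent on U and its image is convex in the direction of the real axis (every horizontal line intersects the image in a connected, possibly empty, set). -/

import Mathlib

open Complex Metric MeasureTheory Set Real ComplexConjugate

noncomputable section

/-- The open unit disk in the complex plane. -/
def 𝔻 : Set ℂ := Metric.ball 0 1

/-- The path integral `∫₀^z φ(t) dt` along the segment from `0` to `z`. -/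
def pathInt (φ : ℂ → ℂ) (z : ℂ) : ℂ :=
  ∫ s in (0:ℝ)..1, z * φ ((s : ℂ) * z)

/-!
The tangent maps the strip `S = {|Re ζ| < π/4}` onto `𝔻`, and for `G = g - h` and `m = μ (tan ζ)`
the chain rule gives `(G ∘ tan)' ζ = R / ((1 - m)⁻¹ - sin² ζ)`. Since `Re (1 - m)⁻¹ > 1/2` for
`|m| < 1`, and `Re sin² ζ = (1 - cos 2x cosh 2y) / 2` for `ζ = x + iy`, the denominator has real
part larger than `cos 2x cosh 2y / 2 > 0`. Hence `(G ∘ tan)'` has positive real part, which makes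
`G ∘ tan` injective on the convex set `S` and `Im (G ∘ tan)` strictly increasing along vertical
lines; and `(G ∘ tan)'` decays as `|y| → ∞`, so `Im (G ∘ tan)` has the same range along every
vertical line of `S`. Each nonempty level set of `Im (G ∘ tan)` is therefore the graph of a
continuous function of `x` over all of `(-π/4, π/4)`, and `G ∘ tan` maps it onto a horizontal
section of `G '' 𝔻`.
-/

open Filter Topology

section PathIntegral

variable {φ : ℂ → ℂ} {s : Set ℂ}

lemma pathInt_eq_sub {g : ℂ → ℂ} (hs : StarConvex ℝ 0 s) (hφ : ContinuousOn φ s)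
    (hg : ∀ w ∈ s, HasDerivAt g (φ w) w) {z : ℂ} (hz : z ∈ s) : pathInt φ z = g z - g 0 := by
  have hmem : ∀ t ∈ Icc (0 : ℝ) 1, 0 + t • z ∈ s := fun t ht => by
    simpa using hs.smul_mem hz ht.1 ht.2
  have hcont : ContinuousOn (fun t : ℝ => φ (0 + t • z)) (Icc 0 1) :=
    hφ.comp (by fun_prop) hmem
  simpa [pathInt] using
    intervalIntegral.integral_unitInterval_deriv_eq_sub hcont fun t ht => hg _ (hmem t ht)

lemma hasDerivAt_pathInt (hs : Convex ℝ s) (hso : IsOpen s) (h0 : 0 ∈ s)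
    (hφ : DifferentiableOn ℂ φ s) {z : ℂ} (hz : z ∈ s) : HasDerivAt (pathInt φ) (φ z) z := by
  obtain ⟨g, hg⟩ := hs.exists_forall_hasDerivWithinAt hφ
  have hg' : ∀ w ∈ s, HasDerivAt g (φ w) w := fun w hw => (hg w hw).hasDerivAt (hso.mem_nhds hw)
  refine ((hg' z hz).sub_const (g 0)).congr_of_eventuallyEq ?_
  filter_upwards [hso.mem_nhds hz] with w hw
  exact pathInt_eq_sub (hs.starConvex h0) hφ.continuousOn hg' hw

end PathIntegral

section PositiveRealPart

variable {f f' : ℂ → ℂ} {s : Set ℂ}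

lemma re_slope_pos (hs : Convex ℝ s) (hf : ∀ z ∈ s, HasDerivWithinAt f (f' z) s z)
    (hpos : ∀ z ∈ s, 0 < (f' z).re) {a b : ℂ} (ha : a ∈ s) (hb : b ∈ s) (hab : a ≠ b) :
    0 < (slope f a b).re := by
  let p : ℝ → ℂ := AffineMap.lineMap a b
  have hp : ∀ t ∈ Icc (0 : ℝ) 1, p t ∈ s := fun t ht => hs.lineMap_mem ha hb ht
  have hder : ∀ t ∈ Icc (0 : ℝ) 1,
      HasDerivWithinAt (fun t => (f (p t) / (b - a)).re) (f' (p t)).re (Icc 0 1) t := by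
    intro t ht
    have hfp := (hf _ (hp t ht)).scomp t AffineMap.hasDerivWithinAt_lineMap hp
    have hre := reCLM.hasFDerivAt.comp_hasDerivWithinAt t (hfp.div_const (b - a))
    refine hre.congr_deriv ?_
    rw [reCLM_apply, smul_eq_mul, mul_div_cancel_left₀ _ (sub_ne_zero.2 hab.symm)]
  obtain ⟨t, ht, hslope⟩ := exists_hasDerivAt_eq_slope (fun t => (f (p t) / (b - a)).re)
    (fun t => (f' (p t)).re) zero_lt_one (fun t ht => (hder t ht).continuousWithinAt)
    fun t ht => (hder t (Ioo_subset_Icc_self ht)).hasDerivAt (Icc_mem_nhds ht.1 ht.2)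
  calc 0 < (f' (p t)).re := hpos _ (hp t (Ioo_subset_Icc_self ht))
    _ = (slope f a b).re := by simp [hslope, p, slope_def_field, sub_div]

lemma injOn_of_re_deriv_pos (hs : Convex ℝ s) (hf : ∀ z ∈ s, HasDerivWithinAt f (f' z) s z)
    (hpos : ∀ z ∈ s, 0 < (f' z).re) : InjOn f s := by
  intro a ha b hb hfab
  by_contra hab
  have hslope := re_slope_pos hs hf hpos ha hb hab
  simp [slope_def_field, hfab] at hslope

lemma strictMono_im_vertical {x : ℝ} (hs : Convex ℝ s)
    (hf : ∀ z ∈ s, HasDerivWithinAt f (f' z) s z) (hpos : ∀ z ∈ s, 0 < (f' z).re)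
    (hx : ∀ y : ℝ, (x + y * I : ℂ) ∈ s) : StrictMono fun y : ℝ => (f (x + y * I)).im := by
  intro a b hab
  have hba : 0 < b - a := sub_pos.2 hab
  have hne : (x + a * I : ℂ) ≠ x + b * I := by simpa using hab.ne
  have hslope : (slope f (x + a * I) (x + b * I)).re
      = ((f (x + b * I)).im - (f (x + a * I)).im) / (b - a) := by
    have hdir : (x + b * I : ℂ) - (x + a * I) = (b - a : ℝ) * I := by push_cast; ring
    rw [slope_def_field, hdir, ← div_div, div_right_comm, div_ofReal_re, div_I]
    simp
  have hquot := re_slope_pos hs hf hpos (hx a) (hx b) hne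
  rw [hslope, div_pos_iff_of_pos_right hba] at hquot
  exact sub_pos.1 hquot

end PositiveRealPart

section LevelCurves

lemma range_subset_range_of_tendsto_sub {u v : ℝ → ℝ} (hu : StrictMono u) (hv : Continuous v)
    (huv : Tendsto (fun y => v y - u y) (cocompact ℝ) (𝓝 0)) : range u ⊆ range v := by
  rw [cocompact_eq_atBot_atTop, tendsto_sup] at huv
  rintro _ ⟨y₀, rfl⟩
  refine mem_range_of_exists_le_of_exists_ge hv ?_ ?_
  · have hgap : 0 < u y₀ - u (y₀ - 1) := sub_pos.2 (hu (sub_one_lt y₀))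
    obtain ⟨y, hclose, hy⟩ :=
      ((huv.1.eventually_lt_const hgap).and (eventually_le_atBot (y₀ - 1))).exists
    exact ⟨y, by linarith [hu.monotone hy]⟩
  · have hgap : u y₀ - u (y₀ + 1) < 0 := sub_neg.2 (hu (lt_add_one y₀))
    obtain ⟨y, hclose, hy⟩ :=
      ((huv.2.eventually_const_lt hgap).and (eventually_ge_atTop (y₀ + 1))).exists
    exact ⟨y, by linarith [hu.monotone hy]⟩

lemma continuousOn_of_strictMono_of_apply_eq {X α β : Type*} [TopologicalSpace X]
    [LinearOrder α] [TopologicalSpace α] [OrderTopology α]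
    [LinearOrder β] [TopologicalSpace β] [OrderClosedTopology β]
    {J : Set X} {u : X → α → β} {Y : X → α} {c : β} (hmono : ∀ x ∈ J, StrictMono (u x))
    (hcont : ∀ y, ContinuousOn (fun x => u x y) J) (hY : ∀ x ∈ J, u x (Y x) = c) :
    ContinuousOn Y J := by
  intro x₀ hx₀
  refine tendsto_order.2 ⟨fun a ha => ?_, fun a ha => ?_⟩
  · have hlt : u x₀ a < c := hY x₀ hx₀ ▸ hmono x₀ hx₀ ha
    filter_upwards [(hcont a x₀ hx₀).eventually_lt_const hlt, self_mem_nhdsWithin] with x hxa hx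
    exact (hmono x hx).lt_iff_lt.1 (hxa.trans_eq (hY x hx).symm)
  · have hlt : c < u x₀ a := hY x₀ hx₀ ▸ hmono x₀ hx₀ ha
    filter_upwards [(hcont a x₀ hx₀).eventually_const_lt hlt, self_mem_nhdsWithin] with x hxa hx
    exact (hmono x hx).lt_iff_lt.1 ((hY x hx).trans_lt hxa)

variable {J : Set ℝ} {f : ℂ → ℂ}

lemma image_inter_im_eq_eq_image_graph {c : ℝ} {Y : ℝ → ℝ}
    (hmono : ∀ x ∈ J, StrictMono fun y : ℝ => (f (x + y * I)).im)
    (hY : ∀ x ∈ J, (f (x + Y x * I)).im = c) :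
    f '' (re ⁻¹' J) ∩ {w | w.im = c} = (fun x : ℝ => f (x + Y x * I)) '' J := by
  apply Subset.antisymm
  · rintro _ ⟨⟨ζ, hζ, rfl⟩, hc⟩
    have hYζ : Y ζ.re = ζ.im := (hmono _ hζ).injective <| by
      simpa only [re_add_im] using (hY _ hζ).trans hc.symm
    exact ⟨ζ.re, hζ, by simp only [hYζ, re_add_im]⟩
  · rintro _ ⟨x, hx, rfl⟩
    exact ⟨⟨_, by simpa using hx, rfl⟩, hY x hx⟩

theorem isPreconnected_image_inter_im_eq (hJ : IsPreconnected J)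
    (hf : ContinuousOn f (re ⁻¹' J))
    (hmono : ∀ x ∈ J, StrictMono fun y : ℝ => (f (x + y * I)).im)
    (hasymp : ∀ x₀ ∈ J, ∀ x₁ ∈ J, Tendsto
      (fun y : ℝ => (f (x₁ + y * I)).im - (f (x₀ + y * I)).im) (cocompact ℝ) (𝓝 0))
    (c : ℝ) : IsPreconnected (f '' (re ⁻¹' J) ∩ {w | w.im = c}) := by
  rcases (f '' (re ⁻¹' J) ∩ {w | w.im = c}).eq_empty_or_nonempty with hempty | hne
  · exact hempty ▸ isPreconnected_empty
  obtain ⟨_, ⟨ζ₀, hζ₀, rfl⟩, hc⟩ := hne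
  have hlevel : ∀ x ∈ J, ∃ y : ℝ, (f (x + y * I)).im = c := by
    intro x hx
    have hcont : Continuous fun y : ℝ => (f (x + y * I)).im :=
      continuous_im.comp (hf.comp_continuous (by fun_prop) fun y => by simpa using hx)
    exact range_subset_range_of_tendsto_sub (hmono _ hζ₀) hcont (hasymp _ hζ₀ x hx)
      ⟨ζ₀.im, by simpa only [re_add_im, mem_ofPred_eq] using hc⟩
  choose! Y hY using hlevel
  have hYcont : ContinuousOn Y J := continuousOn_of_strictMono_of_apply_eq hmono
    (fun y => continuous_im.comp_continuousOn
      (hf.comp (by fun_prop) fun x hx => by simpa using hx)) hY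
  rw [image_inter_im_eq_eq_image_graph hmono hY]
  exact hJ.image _ (hf.comp (by fun_prop) fun x hx => by simpa using hx)

lemma tendsto_vertical_sub_of_norm_deriv_le {f' : ℂ → ℂ} {x₀ x₁ : ℝ} {l : Filter ℝ} {ε : ℝ → ℝ}
    (hf : ∀ ζ : ℂ, ζ.re ∈ uIcc x₀ x₁ → HasDerivAt f (f' ζ) ζ)
    (hbound : ∀ ζ : ℂ, ζ.re ∈ uIcc x₀ x₁ → ‖f' ζ‖ ≤ ε ζ.im) (hε : Tendsto ε l (𝓝 0)) :
    Tendsto (fun y : ℝ => f (x₁ + y * I) - f (x₀ + y * I)) l (𝓝 0) := by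
  have hle : ∀ y : ℝ, ‖f (x₁ + y * I) - f (x₀ + y * I)‖ ≤ ε y * |x₁ - x₀| := by
    intro y
    have hconv : Convex ℝ (uIcc x₀ x₁ ×ℂ {y}) :=
      ((convex_uIcc x₀ x₁).linear_preimage reLm).inter ((convex_singleton y).linear_preimage imLm)
    have hmvt := hconv.norm_image_sub_le_of_norm_hasDerivWithin_le
      (fun ζ hζ => (hf ζ hζ.1).hasDerivWithinAt)
      (fun ζ hζ => (hbound ζ hζ.1).trans_eq (congrArg ε hζ.2))
      (x := x₀ + y * I) (y := x₁ + y * I) (by simp [mem_reProdIm]) (by simp [mem_reProdIm])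
    rwa [add_sub_add_right_eq_sub, ← ofReal_sub, norm_real, Real.norm_eq_abs] at hmvt
  exact squeeze_zero_norm hle (by simpa using hε.mul_const |x₁ - x₀|)

end LevelCurves

section ReciprocalKernel

lemma ne_one_of_norm_lt_one {m : ℂ} (hm : ‖m‖ < 1) : m ≠ 1 := by
  rintro rfl
  simp at hm

lemma half_lt_re_inv_one_sub {m : ℂ} (hm : ‖m‖ < 1) : 1 / 2 < ((1 - m)⁻¹).re := by
  have hpos : 0 < normSq (1 - m) := normSq_pos.2 (sub_ne_zero.2 (ne_one_of_norm_lt_one hm).symm)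
  have hsq : normSq m < 1 := by
    rw [normSq_eq_norm_sq]
    exact pow_lt_one₀ (norm_nonneg m) hm two_ne_zero
  have hexpand : normSq (1 - m) = 1 - 2 * m.re + normSq m := by
    simp only [normSq_apply, sub_re, sub_im, one_re, one_im]
    ring
  rw [inv_re, lt_div_iff₀ hpos, sub_re, one_re]
  linarith

lemma re_sin_sq (ζ : ℂ) :
    (Complex.sin ζ ^ 2).re = (1 - Real.cos (2 * ζ.re) * Real.cosh (2 * ζ.im)) / 2 := by
  have hdouble : 2 * ζ = (2 * ζ.re : ℝ) + (2 * ζ.im : ℝ) * I := by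
    apply Complex.ext <;> simp
  have hcos : (Complex.cos (2 * ζ)).re = Real.cos (2 * ζ.re) * Real.cosh (2 * ζ.im) := by
    rw [hdouble, cos_add_mul_I, ← ofReal_cos, ← ofReal_cosh, ← ofReal_sin, ← ofReal_sinh]
    simp only [sub_re, re_mul_ofReal, ofReal_re, mul_I_re, im_mul_ofReal, ofReal_im, zero_mul,
      neg_zero, sub_zero]
  have hsin : Complex.sin ζ ^ 2 = (1 - Complex.cos (2 * ζ)) / 2 := by
    rw [Complex.cos_two_mul, Complex.sin_sq]
    ring
  rw [hsin, div_ofNat_re, sub_re, one_re, hcos]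

lemma lt_re_inv_one_sub_sub_sin_sq {m : ℂ} (hm : ‖m‖ < 1) (ζ : ℂ) :
    Real.cos (2 * ζ.re) * Real.cosh (2 * ζ.im) / 2 < ((1 - m)⁻¹ - Complex.sin ζ ^ 2).re := by
  rw [sub_re, re_sin_sq]
  linarith [half_lt_re_inv_one_sub hm]

lemma div_one_add_tan_sq_mul_eq_inv {m ζ : ℂ} (hm : m ≠ 1) (hζ : Complex.cos ζ ≠ 0) :
    (1 - m) / (1 + Complex.tan ζ ^ 2 * m) * (1 / Complex.cos ζ ^ 2)
      = ((1 - m)⁻¹ - Complex.sin ζ ^ 2)⁻¹ := by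
  have hm' : 1 - m ≠ 0 := sub_ne_zero.2 hm.symm
  have hden : (1 + Complex.tan ζ ^ 2 * m) * Complex.cos ζ ^ 2
      = ((1 - m)⁻¹ - Complex.sin ζ ^ 2) * (1 - m) := by
    rw [Complex.tan, Complex.sin_sq]
    field_simp
    linear_combination m * Complex.sin_sq_add_cos_sq ζ
  rw [div_mul_div_comm, mul_one, hden, div_mul_cancel_right₀ hm']

lemma re_inv_pos {w : ℂ} (hw : 0 < w.re) : 0 < (w⁻¹).re := by
  have hw0 : w ≠ 0 := by rintro rfl; simp at hw
  rw [inv_re]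
  exact div_pos hw (normSq_pos.2 hw0)

lemma norm_inv_le_inv_of_le_re {w : ℂ} {r : ℝ} (hr : 0 < r) (hw : r ≤ w.re) : ‖w⁻¹‖ ≤ r⁻¹ := by
  rw [norm_inv]
  exact inv_anti₀ hr (hw.trans (re_le_norm w))

end ReciprocalKernel

section Tangent

/-- The vertical strip `|Re ζ| < π/4`, which `tan` maps onto `𝔻`. -/
def tanStrip : Set ℂ := re ⁻¹' Ioo (-(π / 4)) (π / 4)

lemma convex_tanStrip : Convex ℝ tanStrip := (convex_Ioo _ _).linear_preimage reLm

lemma cos_two_mul_pos {x : ℝ} (hx : x ∈ Ioo (-(π / 4)) (π / 4)) : 0 < Real.cos (2 * x) :=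
  Real.cos_pos_of_mem_Ioo ⟨by linarith [hx.1], by linarith [hx.2]⟩

lemma normSq_cos_sub_normSq_sin (ζ : ℂ) :
    normSq (Complex.cos ζ) - normSq (Complex.sin ζ) = Real.cos (2 * ζ.re) := by
  rw [← ofReal_inj]
  push_cast
  rw [← mul_conj, ← mul_conj, ← cos_conj, ← sin_conj, ← Complex.cos_add, add_conj]
  push_cast
  rfl

lemma normSq_sin_lt_normSq_cos {ζ : ℂ} (hζ : ζ ∈ tanStrip) :
    normSq (Complex.sin ζ) < normSq (Complex.cos ζ) := by
  linarith [normSq_cos_sub_normSq_sin ζ, cos_two_mul_pos hζ]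

lemma cos_ne_zero_of_mem_tanStrip {ζ : ℂ} (hζ : ζ ∈ tanStrip) : Complex.cos ζ ≠ 0 :=
  normSq_pos.1 ((normSq_nonneg _).trans_lt (normSq_sin_lt_normSq_cos hζ))

lemma mem_𝔻 {z : ℂ} : z ∈ 𝔻 ↔ ‖z‖ < 1 := mem_ball_zero_iff

lemma tan_mem_𝔻 {ζ : ℂ} (hζ : ζ ∈ tanStrip) : Complex.tan ζ ∈ 𝔻 := by
  have hlt := normSq_sin_lt_normSq_cos hζ
  rw [normSq_eq_norm_sq, normSq_eq_norm_sq] at hlt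
  rw [mem_𝔻, Complex.tan, norm_div, div_lt_one (norm_pos_iff.2 (cos_ne_zero_of_mem_tanStrip hζ))]
  exact lt_of_pow_lt_pow_left₀ 2 (norm_nonneg _) hlt

lemma re_arctan (z : ℂ) : (Complex.arctan z).re = ((1 + z * I) / (1 - z * I)).arg / 2 := by
  rw [Complex.arctan, neg_div, neg_mul, div_mul_eq_mul_div, neg_re, div_ofNat_re, I_mul_re, log_im]
  ring

lemma arctan_mem_tanStrip {z : ℂ} (hz : z ∈ 𝔻) : Complex.arctan z ∈ tanStrip := by
  have hzI : ‖z * I‖ < 1 := by simpa [mem_𝔻] using hz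
  have hsplit : (1 + z * I) / (1 - z * I) = 2 * (1 - z * I)⁻¹ - 1 := by
    have hne : 1 - z * I ≠ 0 := sub_ne_zero.2 (ne_one_of_norm_lt_one hzI).symm
    field_simp
    ring
  have hre : 0 < ((1 + z * I) / (1 - z * I)).re := by
    rw [hsplit, sub_re, one_re, two_mul, add_re]
    linarith [half_lt_re_inv_one_sub hzI]
  have harg := abs_lt.1 (abs_arg_lt_pi_div_two_iff.2 (Or.inl hre))
  rw [tanStrip, mem_preimage, re_arctan]
  exact ⟨by linarith [harg.1], by linarith [harg.2]⟩

lemma tan_image_tanStrip : Complex.tan '' tanStrip = 𝔻 := by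
  refine Subset.antisymm (image_subset_iff.2 fun ζ hζ => tan_mem_𝔻 hζ) fun z hz =>
    ⟨Complex.arctan z, arctan_mem_tanStrip hz, tan_arctan ?_ ?_⟩ <;>
  · rintro rfl
    simp [mem_𝔻] at hz

end Tangent

section Shear

variable {μ : ℂ → ℂ}

lemma one_add_sq_mul_ne_zero {z m : ℂ} (hz : ‖z‖ ≤ 1) (hm : ‖m‖ < 1) : 1 + z ^ 2 * m ≠ 0 := by
  have hlt : ‖-(z ^ 2 * m)‖ < 1 := by
    rw [norm_neg, norm_mul, norm_pow]
    exact mul_lt_one_of_nonneg_of_lt_one_right (pow_le_one₀ (norm_nonneg z) hz)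
      (norm_nonneg m) hm
  simpa using sub_ne_zero.2 (ne_one_of_norm_lt_one hlt).symm

lemma hasDerivAt_pathInt_comp_tan (hμ : DifferentiableOn ℂ μ 𝔻) (hμU : MapsTo μ 𝔻 𝔻) {ζ : ℂ}
    (hζ : ζ ∈ tanStrip) :
    HasDerivAt (pathInt (fun t => (1 - μ t) / (1 + t ^ 2 * μ t)) ∘ Complex.tan)
      ((1 - μ (Complex.tan ζ))⁻¹ - Complex.sin ζ ^ 2)⁻¹ ζ := by
  have hφ : DifferentiableOn ℂ (fun t => (1 - μ t) / (1 + t ^ 2 * μ t)) 𝔻 :=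
    (hμ.const_sub 1).div (((differentiableOn_id.pow 2).mul hμ).const_add 1) fun z hz =>
      one_add_sq_mul_ne_zero (mem_𝔻.1 hz).le (mem_𝔻.1 (hμU hz))
  have hcos := cos_ne_zero_of_mem_tanStrip hζ
  have hm := ne_one_of_norm_lt_one (mem_𝔻.1 (hμU (tan_mem_𝔻 hζ)))
  rw [← div_one_add_tan_sq_mul_eq_inv hm hcos]
  exact (hasDerivAt_pathInt (convex_ball 0 1) isOpen_ball (mem_ball_self one_pos) hφ
    (tan_mem_𝔻 hζ)).comp ζ (Complex.hasDerivAt_tan hcos)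

lemma re_inv_inv_one_sub_sub_sin_sq_pos {m ζ : ℂ} (hm : ‖m‖ < 1) (hζ : ζ ∈ tanStrip) :
    0 < (((1 - m)⁻¹ - Complex.sin ζ ^ 2)⁻¹).re := by
  have hcos_cosh := mul_pos (cos_two_mul_pos hζ) (Real.cosh_pos (2 * ζ.im))
  exact re_inv_pos ((half_pos hcos_cosh).trans (lt_re_inv_one_sub_sub_sin_sq hm ζ))

lemma tendsto_cosh_cocompact : Tendsto Real.cosh (cocompact ℝ) atTop := by
  refine tendsto_atTop_mono (fun y => ?_) (tendsto_norm_cocompact_atTop (E := ℝ))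
  calc |y| ≤ Real.sinh |y| := Real.self_le_sinh_iff.2 (abs_nonneg y)
    _ ≤ Real.cosh |y| := (Real.sinh_lt_cosh _).le
    _ = Real.cosh y := Real.cosh_abs y

lemma tendsto_vertical_sub_of_hasDerivAt_inv {f m : ℂ → ℂ} {R : ℂ}
    (hf : ∀ ζ ∈ tanStrip, HasDerivAt f (R * ((1 - m ζ)⁻¹ - Complex.sin ζ ^ 2)⁻¹) ζ)
    (hm : ∀ ζ ∈ tanStrip, ‖m ζ‖ < 1) {x₀ x₁ : ℝ} (hx₀ : x₀ ∈ Ioo (-(π / 4)) (π / 4))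
    (hx₁ : x₁ ∈ Ioo (-(π / 4)) (π / 4)) :
    Tendsto (fun y : ℝ => f (x₁ + y * I) - f (x₀ + y * I)) (cocompact ℝ) (𝓝 0) := by
  have hsub : uIcc x₀ x₁ ⊆ Ioo (-(π / 4)) (π / 4) := ordConnected_Ioo.uIcc_subset hx₀ hx₁
  obtain ⟨δ, hδ, hcos⟩ := isCompact_uIcc.exists_forall_le' (s := uIcc x₀ x₁)
    (f := fun x => Real.cos (2 * x)) (by fun_prop) fun x hx => cos_two_mul_pos (hsub hx)
  refine tendsto_vertical_sub_of_norm_deriv_le (ε := fun y => ‖R‖ * (δ * Real.cosh (2 * y) / 2)⁻¹)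
    (fun ζ hζ => hf ζ (hsub hζ)) (fun ζ hζ => ?_) ?_
  · have hre : δ * Real.cosh (2 * ζ.im) / 2 ≤ ((1 - m ζ)⁻¹ - Complex.sin ζ ^ 2).re := calc
      _ ≤ Real.cos (2 * ζ.re) * Real.cosh (2 * ζ.im) / 2 := by gcongr; exact hcos _ hζ
      _ ≤ _ := (lt_re_inv_one_sub_sub_sin_sq (hm ζ (hsub hζ)) ζ).le
    rw [norm_mul]
    gcongr
    exact norm_inv_le_inv_of_le_re (by positivity) hre
  · have hscale : Tendsto (fun y : ℝ => 2 * y) (cocompact ℝ) (cocompact ℝ) :=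
      (Homeomorph.mulLeft₀ (2 : ℝ) two_ne_zero).isClosedEmbedding.tendsto_cocompact
    have hgrow := ((tendsto_cosh_cocompact.comp hscale).const_mul_atTop hδ).atTop_div_const two_pos
    simpa using hgrow.inv_tendsto_atTop.const_mul ‖R‖

end Shear

/-- For `R > 0` and `μ : 𝔻 → 𝔻` holomorphic, with
`F = g + conj h`, `g(z) = R∫₀^z dt/(1+t²μ(t))`, `h(z) = R∫₀^z μ(t)dt/(1+t²μ(t))`,
the holomorphic function `g - h : z ↦ R∫₀^z (1-μ(t))/(1+t²μ(t)) dt` is univalent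
on `𝔻` and its image is convex in the direction of the real axis: every
horizontal line meets the image in a connected (possibly empty) set. -/
theorem stmt6 (R : ℝ) (hR : 0 < R) (μ : ℂ → ℂ)
    (hμ : DifferentiableOn ℂ μ 𝔻) (hμU : Set.MapsTo μ 𝔻 𝔻)
    (G : ℂ → ℂ)
    (hGdef : G = fun z => (R : ℂ) * pathInt (fun t => (1 - μ t) / (1 + t ^ 2 * μ t)) z) :
    Set.InjOn G 𝔻 ∧
      ∀ c : ℝ, IsPreconnected ((G '' 𝔻) ∩ {w : ℂ | w.im = c}) := by
  have hm : ∀ ζ ∈ tanStrip, ‖μ (Complex.tan ζ)‖ < 1 := fun ζ hζ => mem_𝔻.1 (hμU (tan_mem_𝔻 hζ))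
  have hder : ∀ ζ ∈ tanStrip, HasDerivAt (G ∘ Complex.tan)
      (R * ((1 - μ (Complex.tan ζ))⁻¹ - Complex.sin ζ ^ 2)⁻¹) ζ := fun ζ hζ =>
    hGdef ▸ (hasDerivAt_pathInt_comp_tan hμ hμU hζ).const_mul (R : ℂ)
  have hpos : ∀ ζ ∈ tanStrip,
      0 < (R * ((1 - μ (Complex.tan ζ))⁻¹ - Complex.sin ζ ^ 2)⁻¹).re := fun ζ hζ => by
    rw [re_ofReal_mul]
    exact mul_pos hR (re_inv_inv_one_sub_sub_sin_sq_pos (hm ζ hζ) hζ)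
  have hderWithin := fun ζ hζ => (hder ζ hζ).hasDerivWithinAt (s := tanStrip)
  rw [← tan_image_tanStrip, ← image_comp]
  refine ⟨(injOn_of_re_deriv_pos convex_tanStrip hderWithin hpos).image_of_comp,
    isPreconnected_image_inter_im_eq isPreconnected_Ioo
      (fun ζ hζ => (hder ζ hζ).continuousAt.continuousWithinAt) (fun x hx => ?_)
      fun x₀ hx₀ x₁ hx₁ => ?_⟩
  · exact strictMono_im_vertical convex_tanStrip hderWithin hpos fun y => by
      simpa [tanStrip] using hx
  · simpa only [Function.comp_def, sub_im, zero_im] using (continuous_im.tendsto 0).comp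
      (tendsto_vertical_sub_of_hasDerivAt_inv hder hm hx₀ hx₁)

end
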